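/- (Occupation asymptotics for the RWG.) Suppose p > 0. With i_n, j_n, k_n as below, let I_n = Σ_{ℓ=0}^n i_ℓ, J_n = Σ_{ℓ=0}^n j_ℓ, K_n = Σ_{ℓ=0}^n k_ℓ. Then almost surely I_n/n → 0, J_n/n → p/(2−p), and K_n/n → 0 as n → ∞; moreover, almost surely (J_n/n − p/(2−p))² = O((log n)/n). -/

import Mathlib

open MeasureTheory ProbabilityTheory Real Filter Set
open scoped BigOperators NNReal

noncomputable section

namespace RWG

abbrev E : Type := EuclideanSpace ℝ (Fin 3)

def vec (x y z : ℝ) : E := (EuclideanSpace.equiv (Fin 3) ℝ).symm ![x, y, z]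

/-- The four families of vertices of the `2h` graphite lattice. -/
def V (a h : ℝ) (i j : Fin 2) : Set E :=
  {v | ∃ k l n : ℤ, v =
    vec (a * ((-1 : ℝ) ^ ((i : ℕ) + 1) * (if j = 1 then (1 : ℝ) else 0) + (3 / 2) * k))
        (a * ((Real.sqrt 3 / 2) * k + Real.sqrt 3 * l))
        (h * (2 * n + (if i ≠ j then (1 : ℝ) else 0)))}

/-- Horizontal jump from a vertex of horizontal type `i` in direction `k`. -/
def w (a : ℝ) (i : Fin 2) (k : Fin 3) : E :=
  vec (a * Real.cos (2 * (k : ℕ) * π / 3 + (i : ℕ) * π))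
      (a * Real.sin (2 * (k : ℕ) * π / 3 + (i : ℕ) * π)) 0

/-- `S` is a random walk on graphite with parameters `a, h, p, α, q` and natural filtration `F`. -/
structure IsRWG {Ω : Type} [MeasurableSpace Ω] (P : Measure Ω)
    (a h p α : ℝ) (q : Fin 2 → Fin 2 → Fin 3 → ℝ)
    (S : ℕ → Ω → E) (F : ℕ → MeasurableSpace Ω) : Prop where
  prob : IsProbabilityMeasure P
  ha : 0 < a
  hh : 0 < h
  hp0 : 0 ≤ p
  hp1 : p ≤ 1
  hα0 : 0 < α
  hα1 : α < 1
  hq : ∀ i j k, 0 ≤ q i j k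
  hqsum0 : ∀ i, q i 0 0 + q i 0 1 + q i 0 2 = 1 - p
  hqsum1 : ∀ i, q i 1 0 + q i 1 1 + q i 1 2 = 1
  hS0 : ∀ ω, S 0 ω = 0
  hSmeas : ∀ n, Measurable (S n)
  hF : ∀ n, F n =
    MeasurableSpace.comap (fun ω (k : Fin n) => S ((k : ℕ) + 1) ω - S (k : ℕ) ω)
      MeasurableSpace.pi
  hTrans : ∀ (n : ℕ) (f : E → ℝ), Measurable f → (∃ C, ∀ x, |f x| ≤ C) →
    P[fun ω => f (S (n + 1) ω)|F n] =ᵐ[P]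
      fun ω => ∑ i : Fin 2,
        ((V a h i 0).indicator (fun _ => (1 : ℝ)) (S n ω) *
          (α * p * f (S n ω + vec 0 0 h) + (1 - α) * p * f (S n ω + vec 0 0 (-h)) +
            ∑ k : Fin 3, q i 0 k * f (S n ω + w a i k)) +
        (V a h i 1).indicator (fun _ => (1 : ℝ)) (S n ω) *
          ∑ k : Fin 3, q i 1 k * f (S n ω + w a i k))

def uu (q : Fin 2 → Fin 2 → Fin 3 → ℝ) (i j : Fin 2) : ℝ := q i j 1 + q i j 2

def vv (q : Fin 2 → Fin 2 → Fin 3 → ℝ) (i j : Fin 2) : ℝ := q i j 1 - q i j 2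

def ss (q : Fin 2 → Fin 2 → Fin 3 → ℝ) (i j : Fin 2) : ℝ := uu q i j * (1 - uu q i j)

def tt (q : Fin 2 → Fin 2 → Fin 3 → ℝ) (i j : Fin 2) : ℝ := vv q i j * (uu q i j - 1)

/-- The vector `μ` of the RWG. -/
def muG (a h p α : ℝ) (q : Fin 2 → Fin 2 → Fin 3 → ℝ) : E :=
  vec (3 * a / 8 * (-(uu q 0 0 + uu q 0 1) + (uu q 1 0 + uu q 1 1)))
      (a * Real.sqrt 3 / 8 * ((vv q 0 0 + vv q 0 1) - (vv q 1 0 + vv q 1 1)))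
      (h * p / 2 * (2 * α - 1))

/-- The vector `m` of the RWG. -/
def mG (a h p α : ℝ) (q : Fin 2 → Fin 2 → Fin 3 → ℝ) : E :=
  vec (3 * a / 8 * (-(uu q 0 0 - uu q 0 1) + (uu q 1 0 - uu q 1 1)))
      (a * Real.sqrt 3 / 8 * ((vv q 0 0 - vv q 0 1) - (vv q 1 0 - vv q 1 1)))
      (h * p / 2 * (2 * α - 1))

/-- The vector `θ` of the RWG. -/
def thetaG (a p : ℝ) (q : Fin 2 → Fin 2 → Fin 3 → ℝ) : E :=
  vec (a * ((1 - p / 2) - 3 / 8 * ((uu q 0 0 + uu q 0 1) + (uu q 1 0 + uu q 1 1))))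
      (a * Real.sqrt 3 / 8 * ((vv q 0 0 + vv q 0 1) + (vv q 1 0 + vv q 1 1))) 0

/-- The vector `ρ` of the RWG. -/
def rhoG (a p : ℝ) (q : Fin 2 → Fin 2 → Fin 3 → ℝ) : E :=
  vec (a * (-(p / 2) - 3 / 8 * ((uu q 0 0 - uu q 0 1) + (uu q 1 0 - uu q 1 1))))
      (a * Real.sqrt 3 / 8 * ((vv q 0 0 - vv q 0 1) + (vv q 1 0 - vv q 1 1))) 0

/-- The vector `ζ = (0, 0, hp(2α−1))`. -/
def zetaG (h p α : ℝ) : E := vec 0 0 (h * p * (2 * α - 1))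

/-- The indicator process `i_n`. -/
def iP {Ω : Type} (a h : ℝ) (S : ℕ → Ω → E) (n : ℕ) (ω : Ω) : ℝ :=
  (V a h 0 0 ∪ V a h 0 1).indicator (fun _ => (1 : ℝ)) (S n ω) -
    (V a h 1 0 ∪ V a h 1 1).indicator (fun _ => (1 : ℝ)) (S n ω)

/-- The indicator process `j_n`. -/
def jP {Ω : Type} (a h : ℝ) (S : ℕ → Ω → E) (n : ℕ) (ω : Ω) : ℝ :=
  (V a h 0 0 ∪ V a h 1 0).indicator (fun _ => (1 : ℝ)) (S n ω) -
    (V a h 0 1 ∪ V a h 1 1).indicator (fun _ => (1 : ℝ)) (S n ω)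

/-- The indicator process `k_n`. -/
def kP {Ω : Type} (a h : ℝ) (S : ℕ → Ω → E) (n : ℕ) (ω : Ω) : ℝ :=
  (V a h 0 0 ∪ V a h 1 1).indicator (fun _ => (1 : ℝ)) (S n ω) -
    (V a h 0 1 ∪ V a h 1 0).indicator (fun _ => (1 : ℝ)) (S n ω)

/-- The matrix `σ²` of the RWG. -/
def sigmaG (a h p α : ℝ) (q : Fin 2 → Fin 2 → Fin 3 → ℝ) : Matrix (Fin 3) (Fin 3) ℝ :=
  !![a ^ 2 / 4 * (2 * p * (1 - p) + 9 / 4 * (ss q 0 0 + ss q 1 0 + ss q 0 1 + ss q 1 1)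
        - 3 * p * (uu q 0 0 + uu q 1 0)),
     a ^ 2 * Real.sqrt 3 / 16 * (3 * (tt q 0 0 + tt q 1 0 + tt q 0 1 + tt q 1 1)
        + 2 * p * (vv q 0 0 + vv q 1 0)),
     a * h / 8 * (-4 * p * (1 - p) * (2 * α - 1)
        + 3 * p * (2 * α - 1) * (uu q 0 0 + uu q 1 0));
     a ^ 2 * Real.sqrt 3 / 16 * (3 * (tt q 0 0 + tt q 1 0 + tt q 0 1 + tt q 1 1)
        + 2 * p * (vv q 0 0 + vv q 1 0)),
     3 * a ^ 2 / 16 * ((uu q 0 0 + uu q 1 0 + uu q 0 1 + uu q 1 1)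
        - ((vv q 0 0) ^ 2 + (vv q 1 0) ^ 2 + (vv q 0 1) ^ 2 + (vv q 1 1) ^ 2)),
     -(a * h * Real.sqrt 3 / 8) * (p * (2 * α - 1) * (vv q 0 0 + vv q 1 0));
     a * h / 8 * (-4 * p * (1 - p) * (2 * α - 1)
        + 3 * p * (2 * α - 1) * (uu q 0 0 + uu q 1 0)),
     -(a * h * Real.sqrt 3 / 8) * (p * (2 * α - 1) * (vv q 0 0 + vv q 1 0)),
     h ^ 2 * p / 2 * (1 - p * (2 * α - 1) ^ 2)]

/-- The matrix `γ` of the RWG. -/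
def gammaG (a h p α : ℝ) (q : Fin 2 → Fin 2 → Fin 3 → ℝ) : Matrix (Fin 3) (Fin 3) ℝ :=
  !![a ^ 2 / 4 * (2 * p * (1 - p) + 9 / 4 * (ss q 0 0 + ss q 1 0 - ss q 0 1 - ss q 1 1)
        - 3 * p * (uu q 0 0 + uu q 1 0)),
     a ^ 2 * Real.sqrt 3 / 16 * (3 * (tt q 0 0 + tt q 1 0 - tt q 0 1 - tt q 1 1)
        + 2 * p * (vv q 0 0 + vv q 1 0)),
     a * h / 8 * (-4 * p * (1 - p) * (2 * α - 1)
        + 3 * p * (2 * α - 1) * (uu q 0 0 + uu q 1 0));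
     a ^ 2 * Real.sqrt 3 / 16 * (3 * (tt q 0 0 + tt q 1 0 - tt q 0 1 - tt q 1 1)
        + 2 * p * (vv q 0 0 + vv q 1 0)),
     3 * a ^ 2 / 16 * ((uu q 0 0 + uu q 1 0 - uu q 0 1 - uu q 1 1)
        - ((vv q 0 0) ^ 2 + (vv q 1 0) ^ 2 - (vv q 0 1) ^ 2 - (vv q 1 1) ^ 2)),
     -(a * h * Real.sqrt 3 / 8) * (p * (2 * α - 1) * (vv q 0 0 + vv q 1 0));
     a * h / 8 * (-4 * p * (1 - p) * (2 * α - 1)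
        + 3 * p * (2 * α - 1) * (uu q 0 0 + uu q 1 0)),
     -(a * h * Real.sqrt 3 / 8) * (p * (2 * α - 1) * (vv q 0 0 + vv q 1 0)),
     h ^ 2 * p / 2 * (1 - p * (2 * α - 1) ^ 2)]

/-- The matrix `δ` of the RWG. -/
def deltaG (a h p α : ℝ) (q : Fin 2 → Fin 2 → Fin 3 → ℝ) : Matrix (Fin 3) (Fin 3) ℝ :=
  !![a ^ 2 / 4 * (9 / 4 * (ss q 0 0 - ss q 1 0 - ss q 0 1 + ss q 1 1)
        - 3 * p * (uu q 0 0 - uu q 1 0)),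
     a ^ 2 * Real.sqrt 3 / 16 * (3 * (tt q 0 0 - tt q 1 0 - tt q 0 1 + tt q 1 1)
        + 2 * p * (vv q 0 0 - vv q 1 0)),
     a * h / 8 * (3 * p * (2 * α - 1) * (uu q 0 0 - uu q 1 0));
     a ^ 2 * Real.sqrt 3 / 16 * (3 * (tt q 0 0 - tt q 1 0 - tt q 0 1 + tt q 1 1)
        + 2 * p * (vv q 0 0 - vv q 1 0)),
     3 * a ^ 2 / 16 * ((uu q 0 0 - uu q 1 0 - uu q 0 1 + uu q 1 1)
        - ((vv q 0 0) ^ 2 - (vv q 1 0) ^ 2 - (vv q 0 1) ^ 2 + (vv q 1 1) ^ 2)),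
     -(a * h * Real.sqrt 3 / 8) * (p * (2 * α - 1) * (vv q 0 0 - vv q 1 0));
     a * h / 8 * (3 * p * (2 * α - 1) * (uu q 0 0 - uu q 1 0)),
     -(a * h * Real.sqrt 3 / 8) * (p * (2 * α - 1) * (vv q 0 0 - vv q 1 0)),
     0]

/-- A probability measure on `ℝ³` is the centered Gaussian law with covariance matrix `Γ`
if every linear functional pushes it to the corresponding one-dimensional Gaussian law. -/
def IsCenteredGaussian (G : Measure E) (Γ : Matrix (Fin 3) (Fin 3) ℝ) : Prop :=
  IsProbabilityMeasure G ∧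
    ∀ u : Fin 3 → ℝ, G.map (fun x => ∑ r, u r * x r) =
      gaussianReal 0 (Real.toNNReal (∑ r, ∑ c, u r * Γ r c * u c))

/-- View a point of `ℝ³` as a plain function on indices. -/
def toFun (x : E) : Fin 3 → ℝ := x

end RWG

namespace RWG

/-- `I_n = ∑_{ℓ=0}^n i_ℓ`. -/
def IG {Ω : Type} (a h : ℝ) (S : ℕ → Ω → E) (n : ℕ) (ω : Ω) : ℝ :=
  ∑ l ∈ Finset.range (n + 1), iP a h S l ω

/-- `J_n = ∑_{ℓ=0}^n j_ℓ`. -/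
def JG {Ω : Type} (a h : ℝ) (S : ℕ → Ω → E) (n : ℕ) (ω : Ω) : ℝ :=
  ∑ l ∈ Finset.range (n + 1), jP a h S l ω

/-- `K_n = ∑_{ℓ=0}^n k_ℓ`. -/
def KG {Ω : Type} (a h : ℝ) (S : ℕ → Ω → E) (n : ℕ) (ω : Ω) : ℝ :=
  ∑ l ∈ Finset.range (n + 1), kP a h S l ω

end RWG

namespace RWG

section Lattice

variable {a h : ℝ}

lemma vec_add (x y z x' y' z' : ℝ) :
    vec x y z + vec x' y' z' = vec (x + x') (y + y') (z + z') := by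
  ext r
  fin_cases r <;> simp [vec]

lemma vec_injective {x y z x' y' z' : ℝ} (e : vec x y z = vec x' y' z') :
    x = x' ∧ y = y' ∧ z = z' := by
  have e' := (EuclideanSpace.equiv (Fin 3) ℝ).symm.injective e
  exact ⟨congrFun e' 0, congrFun e' 1, congrFun e' 2⟩

lemma measurableSet_V (i j : Fin 2) : MeasurableSet (V a h i j) := by
  refine Set.Countable.measurableSet ?_
  refine (countable_range fun x : ℤ × ℤ × ℤ => vec
    (a * ((-1 : ℝ) ^ ((i : ℕ) + 1) * (if j = 1 then (1 : ℝ) else 0) + (3 / 2) * x.1))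
    (a * ((Real.sqrt 3 / 2) * x.1 + Real.sqrt 3 * x.2.1))
    (h * (2 * x.2.2 + (if i ≠ j then (1 : ℝ) else 0)))).mono ?_
  rintro v ⟨k, l, n, rfl⟩
  exact ⟨(k, l, n), rfl⟩

/-- The four families of vertices are pairwise disjoint. -/
lemma eq_of_mem_V (ha : 0 < a) (hh : 0 < h) {i j i' j' : Fin 2} {v : E}
    (hv : v ∈ V a h i j) (hv' : v ∈ V a h i' j') : i = i' ∧ j = j' := by
  obtain ⟨k, l, n, rfl⟩ := hv
  obtain ⟨k', l', n', e⟩ := hv'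
  obtain ⟨hx, -, hz⟩ := vec_injective e
  have hx := mul_left_cancel₀ ha.ne' hx
  have hz := mul_left_cancel₀ hh.ne' hz
  fin_cases i <;> fin_cases j <;> fin_cases i' <;> fin_cases j' <;> norm_num at hx hz ⊢ <;>
  first
  | (have h₁ : (3 * k : ℤ) = 3 * k' + 2 := by
       exact_mod_cast (by linarith : (3 * k : ℝ) = 3 * k' + 2)
     omega)
  | (have h₁ : (3 * k : ℤ) + 2 = 3 * k' := by
       exact_mod_cast (by linarith : (3 * k : ℝ) + 2 = 3 * k')
     omega)
  | (have h₁ : (2 * n : ℤ) = 2 * n' + 1 := by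
       exact_mod_cast (by linarith : (2 * n : ℝ) = 2 * n' + 1)
     omega)
  | (have h₁ : (2 * n : ℤ) + 1 = 2 * n' := by
       exact_mod_cast (by linarith : (2 * n : ℝ) + 1 = 2 * n')
     omega)

lemma add_vec_up_mem {i : Fin 2} {v : E} (hv : v ∈ V a h i 0) :
    v + vec 0 0 h ∈ V a h (i + 1) 0 := by
  obtain ⟨k, l, n, rfl⟩ := hv
  have h11 : (1 + 1 : Fin 2) = 0 := rfl
  rw [vec_add]
  fin_cases i
  · exact ⟨k, l, n, by congr 1 <;> simp; ring⟩
  · exact ⟨k, l, n + 1, by congr 1 <;> simp [h11]; ring⟩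

lemma add_vec_down_mem {i : Fin 2} {v : E} (hv : v ∈ V a h i 0) :
    v + vec 0 0 (-h) ∈ V a h (i + 1) 0 := by
  obtain ⟨k, l, n, rfl⟩ := hv
  have h11 : (1 + 1 : Fin 2) = 0 := rfl
  rw [vec_add]
  fin_cases i
  · exact ⟨k, l, n - 1, by congr 1 <;> simp; ring⟩
  · exact ⟨k, l, n, by congr 1 <;> simp [h11]; ring⟩

lemma w_eq (i : Fin 2) (k : Fin 3) :
    w a i k = vec ((-1) ^ (i : ℕ) * (a * ![1, -1 / 2, -1 / 2] k))
      ((-1) ^ (i : ℕ) * (a * ![0, √3 / 2, -(√3 / 2)] k)) 0 := by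
  have c₁ : cos (2 * π / 3) = -1 / 2 := by
    rw [show 2 * π / 3 = π - π / 3 by ring, cos_pi_sub, cos_pi_div_three]; ring
  have s₁ : sin (2 * π / 3) = √3 / 2 := by
    rw [show 2 * π / 3 = π - π / 3 by ring, sin_pi_sub, sin_pi_div_three]
  have c₂ : cos (2 * 2 * π / 3) = -1 / 2 := by
    rw [show 2 * 2 * π / 3 = π / 3 + π by ring, cos_add_pi, cos_pi_div_three]; ring
  have s₂ : sin (2 * 2 * π / 3) = -(√3 / 2) := by
    rw [show 2 * 2 * π / 3 = π / 3 + π by ring, sin_add_pi, sin_pi_div_three]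
  fin_cases i <;> fin_cases k <;> simp [w, cos_add_pi, sin_add_pi, c₁, s₁, c₂, s₂]

/-- A horizontal jump switches both indices. -/
lemma add_w_mem {i j : Fin 2} (m : Fin 3) {v : E} (hv : v ∈ V a h i j) :
    v + w a i m ∈ V a h (i + 1) (j + 1) := by
  obtain ⟨k, l, n, rfl⟩ := hv
  have h11 : (1 + 1 : Fin 2) = 0 := rfl
  rw [w_eq, vec_add]
  fin_cases i <;> fin_cases m
  · exact ⟨k, l, n, by congr 1 <;> fin_cases j <;> simp [h11] <;> ring⟩
  · exact ⟨k - 1, l + 1, n, by congr 1 <;> fin_cases j <;> simp [h11] <;> ring⟩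
  · exact ⟨k - 1, l, n, by congr 1 <;> fin_cases j <;> simp [h11] <;> ring⟩
  · exact ⟨k, l, n, by congr 1 <;> fin_cases j <;> simp [h11] <;> ring⟩
  · exact ⟨k + 1, l - 1, n, by congr 1 <;> fin_cases j <;> simp [h11] <;> ring⟩
  · exact ⟨k + 1, l, n, by congr 1 <;> fin_cases j <;> simp [h11] <;> ring⟩

end Lattice

/-- The chord of `x ↦ exp (t * x)` over `[-c, c]` lies above the graph. -/
lemma exp_mul_le_cosh_add_sinh {c x : ℝ} (hc : 0 < c) (hx : |x| ≤ c) (t : ℝ) :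
    exp (t * x) ≤ cosh (t * c) + x / c * sinh (t * c) := by
  obtain ⟨h₁, h₂⟩ := abs_le.mp hx
  have hlo : 0 ≤ (1 - x / c) / 2 := by
    have : x / c ≤ 1 := (div_le_one hc).mpr h₂
    linarith
  have hhi : 0 ≤ (1 + x / c) / 2 := by
    have : -1 ≤ x / c := (le_div_iff₀ hc).mpr (by linarith)
    linarith
  have hconv := convexOn_exp.2 (mem_univ (t * c)) (mem_univ (-(t * c))) hhi hlo (by ring)
  simp only [smul_eq_mul] at hconv
  have hpt : (1 + x / c) / 2 * (t * c) + (1 - x / c) / 2 * -(t * c) = t * x := by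
    field_simp
    ring
  rw [hpt] at hconv
  rw [cosh_eq, sinh_eq]
  linarith

section Martingale

variable {Ω : Type*} {mΩ : MeasurableSpace Ω} {P : Measure Ω} [IsProbabilityMeasure P]
  {F : ℕ → MeasurableSpace Ω} {ξ : ℕ → Ω → ℝ} {c : ℝ}

lemma integral_mul_eq_zero_of_condExp {m : MeasurableSpace Ω} (hm : m ≤ mΩ) {Z X : Ω → ℝ}
    (hZ : Measurable[m] Z) {B : ℝ} (hB : ∀ ω, |Z ω| ≤ B) (hX : Integrable X P)
    (h0 : P[X|m] =ᵐ[P] 0) : ∫ ω, Z ω * X ω ∂P = 0 := by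
  have hpull := condExp_stronglyMeasurable_mul_of_bound hm hZ.stronglyMeasurable hX B
    (ae_of_all _ hB)
  calc ∫ ω, Z ω * X ω ∂P = ∫ ω, (P[Z * X|m]) ω ∂P := (integral_condExp hm).symm
    _ = ∫ _, (0 : ℝ) ∂P := by
      refine integral_congr_ae ?_
      filter_upwards [hpull, h0] with ω h₁ h₂
      simp [h₁, h₂]
    _ = 0 := by simp

lemma abs_sum_range_le (hbd : ∀ n ω, |ξ n ω| ≤ c) (n : ℕ) (ω : Ω) :
    |∑ l ∈ Finset.range n, ξ l ω| ≤ n * c := by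
  calc |∑ l ∈ Finset.range n, ξ l ω| ≤ ∑ l ∈ Finset.range n, |ξ l ω| :=
        Finset.abs_sum_le_sum_abs _ _
    _ ≤ ∑ _l ∈ Finset.range n, c := Finset.sum_le_sum fun l _ => hbd l ω
    _ = n * c := by simp

lemma integrable_exp_mul_sum (hmeas : ∀ n, Measurable (ξ n)) (hbd : ∀ n ω, |ξ n ω| ≤ c)
    (t : ℝ) (n : ℕ) : Integrable (fun ω => exp (t * ∑ l ∈ Finset.range n, ξ l ω)) P := by
  refine Integrable.of_bound (C := exp (|t| * (n * c))) ?_ (ae_of_all _ fun ω => ?_)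
  · exact (measurable_exp.comp
      ((Finset.measurable_sum _ fun l _ => hmeas l).const_mul t)).aestronglyMeasurable
  · rw [norm_eq_abs, abs_exp, exp_le_exp]
    calc t * ∑ l ∈ Finset.range n, ξ l ω ≤ |t * ∑ l ∈ Finset.range n, ξ l ω| := le_abs_self _
      _ = |t| * |∑ l ∈ Finset.range n, ξ l ω| := abs_mul _ _
      _ ≤ |t| * (n * c) := by gcongr; exact abs_sum_range_le hbd n ω

/-- Azuma–Hoeffding bound for the exponential moments of a martingale with bounded increments. -/
lemma mgf_sum_le (hc : 0 < c) (hF : ∀ n, F n ≤ mΩ) (hmeas : ∀ n, Measurable (ξ n))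
    (hbd : ∀ n ω, |ξ n ω| ≤ c)
    (hadapt : ∀ n, Measurable[F n] fun ω => ∑ l ∈ Finset.range n, ξ l ω)
    (h0 : ∀ n, P[ξ n|F n] =ᵐ[P] 0) (t : ℝ) (n : ℕ) :
    mgf (fun ω => ∑ l ∈ Finset.range n, ξ l ω) P t ≤ exp (n * ((t * c) ^ 2 / 2)) := by
  induction n with
  | zero => simp [mgf]
  | succ n ih =>
    set M : Ω → ℝ := fun ω => ∑ l ∈ Finset.range n, ξ l ω with hM
    have hexp : Integrable (fun ω => exp (t * M ω)) P := integrable_exp_mul_sum hmeas hbd t n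
    have hξ : Integrable (ξ n) P :=
      Integrable.of_bound (hmeas n).aestronglyMeasurable c (ae_of_all _ fun ω => hbd n ω)
    have hprod : Integrable (fun ω => exp (t * M ω) * ξ n ω) P :=
      hexp.mul_bdd (hmeas n).aestronglyMeasurable (ae_of_all _ fun ω => hbd n ω)
    have horth : ∫ ω, exp (t * M ω) * ξ n ω ∂P = 0 := by
      refine integral_mul_eq_zero_of_condExp (hF n) (B := exp (|t| * (n * c)))
        (measurable_exp.comp ((hadapt n).const_mul t)) (fun ω => ?_) hξ (h0 n)
      rw [abs_exp, exp_le_exp]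
      refine (le_abs_self _).trans ?_
      rw [abs_mul]
      gcongr
      exact abs_sum_range_le hbd n ω
    calc mgf (fun ω => ∑ l ∈ Finset.range (n + 1), ξ l ω) P t
        ≤ ∫ ω, (cosh (t * c) * exp (t * M ω) +
            sinh (t * c) / c * (exp (t * M ω) * ξ n ω)) ∂P := by
          refine integral_mono (integrable_exp_mul_sum hmeas hbd t (n + 1))
            ((hexp.const_mul _).add (hprod.const_mul _)) fun ω => ?_
          have h := mul_le_mul_of_nonneg_left (exp_mul_le_cosh_add_sinh hc (hbd n ω) t)
            (exp_pos (t * M ω)).le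
          simp only [Finset.sum_range_succ, mul_add, exp_add]
          refine h.trans (le_of_eq ?_)
          ring
      _ = cosh (t * c) * mgf M P t := by
          rw [integral_add (hexp.const_mul _) (hprod.const_mul _), integral_const_mul,
            integral_const_mul, horth, mul_zero, add_zero, mgf]
      _ ≤ exp ((t * c) ^ 2 / 2) * exp (n * ((t * c) ^ 2 / 2)) := by
          gcongr
          · exact mgf_nonneg
          · exact cosh_le_exp_half_sq _
      _ = exp ((n + 1 : ℕ) * ((t * c) ^ 2 / 2)) := by
          rw [← exp_add]
          push_cast
          ring_nf

lemma measureReal_sum_ge_le (hc : 0 < c) (hF : ∀ n, F n ≤ mΩ) (hmeas : ∀ n, Measurable (ξ n))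
    (hbd : ∀ n ω, |ξ n ω| ≤ c)
    (hadapt : ∀ n, Measurable[F n] fun ω => ∑ l ∈ Finset.range n, ξ l ω)
    (h0 : ∀ n, P[ξ n|F n] =ᵐ[P] 0) {n : ℕ} (hn : 0 < n) :
    P.real {ω | 2 * c * √(n * log n) ≤ ∑ l ∈ Finset.range n, ξ l ω} ≤ 1 / (n : ℝ) ^ 2 := by
  have hn' : (0 : ℝ) < n := by exact_mod_cast hn
  have hlog : 0 ≤ n * log n := mul_nonneg hn'.le (log_natCast_nonneg n)
  set s := √(n * log n) with hs
  have hss : s ^ 2 = n * log n := sq_sqrt hlog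
  have ht : 0 ≤ 2 * s / (n * c) := by positivity
  refine (measure_ge_le_exp_mul_mgf (2 * c * s) ht
    (integrable_exp_mul_sum hmeas hbd _ n)).trans ?_
  calc exp (-(2 * s / (n * c)) * (2 * c * s)) * mgf (fun ω => ∑ l ∈ Finset.range n, ξ l ω) P _
      ≤ exp (-(2 * s / (n * c)) * (2 * c * s)) * exp (n * ((2 * s / (n * c) * c) ^ 2 / 2)) := by
        gcongr
        exact mgf_sum_le hc hF hmeas hbd hadapt h0 _ n
    _ = exp (-(2 * log n)) := by
        rw [← exp_add]
        congr 1
        field_simp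
        rw [hss]
        ring
    _ = 1 / (n : ℝ) ^ 2 := by
        rw [exp_neg, two_mul, exp_add, exp_log hn', one_div, sq]

/-- A martingale with bounded increments is almost surely `O(√(n log n))`. -/
lemma ae_eventually_sum_sq_le (hc : 0 < c) (hF : ∀ n, F n ≤ mΩ) (hmeas : ∀ n, Measurable (ξ n))
    (hbd : ∀ n ω, |ξ n ω| ≤ c)
    (hadapt : ∀ n, Measurable[F n] fun ω => ∑ l ∈ Finset.range n, ξ l ω)
    (h0 : ∀ n, P[ξ n|F n] =ᵐ[P] 0) :
    ∀ᵐ ω ∂P, ∀ᶠ n : ℕ in atTop,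
      (∑ l ∈ Finset.range n, ξ l ω) ^ 2 ≤ 4 * c ^ 2 * (n * log n) := by
  have upper : ∀ {η : ℕ → Ω → ℝ}, (∀ n, Measurable (η n)) → (∀ n ω, |η n ω| ≤ c) →
      (∀ n, Measurable[F n] fun ω => ∑ l ∈ Finset.range n, η l ω) →
      (∀ n, P[η n|F n] =ᵐ[P] 0) →
      ∀ᵐ ω ∂P, ∀ᶠ n : ℕ in atTop, ∑ l ∈ Finset.range n, η l ω < 2 * c * √(n * log n) := by
    intro η hη₁ hη₂ hη₃ hη₄
    have hsum : ∑' n : ℕ, P {ω | 2 * c * √((n + 1 : ℕ) * log (n + 1 : ℕ)) ≤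
        ∑ l ∈ Finset.range (n + 1), η l ω} ≠ ⊤ := by
      have hs : Summable fun n : ℕ => 1 / ((n + 1 : ℕ) : ℝ) ^ 2 :=
        (summable_nat_add_iff 1).mpr (summable_one_div_nat_pow.mpr one_lt_two)
      refine ne_top_of_le_ne_top hs.tsum_ofReal_ne_top (ENNReal.tsum_le_tsum fun n => ?_)
      rw [← ofReal_measureReal]
      exact ENNReal.ofReal_le_ofReal
        (measureReal_sum_ge_le hc hF hη₁ hη₂ hη₃ hη₄ n.succ_pos)
    filter_upwards [ae_eventually_notMem hsum] with ω hω
    filter_upwards [(tendsto_sub_atTop_nat 1).eventually hω, eventually_ge_atTop 1] with n hn hn₁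
    rw [Nat.sub_add_cancel hn₁] at hn
    exact not_le.mp hn
  have hneg : ∀ n, P[fun ω => -ξ n ω|F n] =ᵐ[P] 0 := fun n => by
    filter_upwards [condExp_neg (ξ n) (F n) (μ := P), h0 n] with ω h₁ h₂
    exact h₁.trans (by simp [h₂])
  filter_upwards [upper hmeas hbd hadapt h0, upper (η := fun n ω => -ξ n ω)
    (fun n => (hmeas n).neg) (fun n ω => by simpa using hbd n ω)
    (fun n => by simpa only [Finset.sum_neg_distrib] using (hadapt n).fun_neg) hneg] with ω h₁ h₂
  filter_upwards [h₁, h₂] with n hn₁ hn₂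
  rw [Finset.sum_neg_distrib] at hn₂
  have hlog : 0 ≤ n * log n := mul_nonneg n.cast_nonneg (log_natCast_nonneg n)
  calc (∑ l ∈ Finset.range n, ξ l ω) ^ 2 ≤ (2 * c * √(n * log n)) ^ 2 :=
        sq_le_sq' (by linarith) hn₁.le
    _ = 4 * c ^ 2 * (n * log n) := by rw [mul_pow, sq_sqrt hlog]; ring

end Martingale

section Signs

variable {a h : ℝ}

lemma mem_V_iff (ha : 0 < a) (hh : 0 < h) {i j i' j' : Fin 2} {v : E} (hv : v ∈ V a h i j) :
    v ∈ V a h i' j' ↔ i = i' ∧ j = j' :=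
  ⟨eq_of_mem_V ha hh hv, fun ⟨hi, hj⟩ => hi ▸ hj ▸ hv⟩

/-- The sign which distinguishes the two horizontal types, as a function of the vertex. -/
def jSign (a h : ℝ) (v : E) : ℝ :=
  (V a h 0 0 ∪ V a h 1 0).indicator (fun _ => (1 : ℝ)) v -
    (V a h 0 1 ∪ V a h 1 1).indicator (fun _ => (1 : ℝ)) v

lemma jP_eq_jSign {Ω : Type} (S : ℕ → Ω → E) (n : ℕ) (ω : Ω) :
    jP a h S n ω = jSign a h (S n ω) := rfl

lemma measurable_jSign : Measurable (jSign a h) :=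
  (measurable_const.indicator ((measurableSet_V 0 0).union (measurableSet_V 1 0))).sub
    (measurable_const.indicator ((measurableSet_V 0 1).union (measurableSet_V 1 1)))

lemma abs_jSign_le (v : E) : |jSign a h v| ≤ 1 := by
  unfold jSign
  simp only [Set.indicator]
  split_ifs <;> norm_num

lemma jSign_of_mem (ha : 0 < a) (hh : 0 < h) {i j : Fin 2} {v : E} (hv : v ∈ V a h i j) :
    jSign a h v = (-1) ^ (j : ℕ) := by
  simp only [jSign, Set.indicator, Set.mem_union, mem_V_iff ha hh hv]
  fin_cases i <;> fin_cases j <;> simp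

lemma iP_of_mem {Ω : Type} {S : ℕ → Ω → E} {n : ℕ} {ω : Ω} (ha : 0 < a) (hh : 0 < h)
    {i j : Fin 2} (hv : S n ω ∈ V a h i j) : iP a h S n ω = (-1) ^ (i : ℕ) := by
  simp only [iP, Set.indicator, Set.mem_union, mem_V_iff ha hh hv]
  fin_cases i <;> fin_cases j <;> simp

lemma kP_of_mem {Ω : Type} {S : ℕ → Ω → E} {n : ℕ} {ω : Ω} (ha : 0 < a) (hh : 0 < h)
    {i j : Fin 2} (hv : S n ω ∈ V a h i j) :
    kP a h S n ω = (-1) ^ (i : ℕ) * (-1) ^ (j : ℕ) := by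
  simp only [kP, Set.indicator, Set.mem_union, mem_V_iff ha hh hv]
  fin_cases i <;> fin_cases j <;> simp

lemma sum_indicator_V (ha : 0 < a) (hh : 0 < h) {i j : Fin 2} {v : E} (hv : v ∈ V a h i j)
    (g₀ g₁ : Fin 2 → ℝ) :
    ∑ i' : Fin 2, ((V a h i' 0).indicator (fun _ => (1 : ℝ)) v * g₀ i' +
      (V a h i' 1).indicator (fun _ => (1 : ℝ)) v * g₁ i') = if j = 0 then g₀ i else g₁ i := by
  simp only [Set.indicator, mem_V_iff ha hh hv]
  fin_cases i <;> fin_cases j <;> simp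

lemma neg_one_pow_fin_add_one (i : Fin 2) :
    (-1 : ℝ) ^ ((i + 1 : Fin 2) : ℕ) = -(-1) ^ (i : ℕ) := by
  fin_cases i <;> simp

/-- The vertices whose type `i` has the parity of `n`. -/
def evenOdd (a h : ℝ) (n : ℕ) : Set E :=
  {v | ∃ i j : Fin 2, v ∈ V a h i j ∧ (-1 : ℝ) ^ (i : ℕ) = (-1) ^ n}

lemma measurableSet_evenOdd (n : ℕ) : MeasurableSet (evenOdd a h n) := by
  have : evenOdd a h n =
      ⋃ i : Fin 2, ⋃ j : Fin 2, {v | v ∈ V a h i j ∧ (-1 : ℝ) ^ (i : ℕ) = (-1) ^ n} := by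
    ext v
    simp [evenOdd]
  rw [this]
  exact .iUnion fun i => .iUnion fun j => (measurableSet_V i j).inter (.const _)

/-- The martingale increments driving the occupation counts. -/
def incr {Ω : Type} (a h p : ℝ) (S : ℕ → Ω → E) (n : ℕ) (ω : Ω) : ℝ :=
  jSign a h (S (n + 1) ω) + ((1 - p) * jSign a h (S n ω) - p)

lemma abs_incr_le {Ω : Type} {S : ℕ → Ω → E} {p : ℝ} (hp0 : 0 ≤ p) (hp1 : p ≤ 1) (n : ℕ)
    (ω : Ω) : |incr a h p S n ω| ≤ 2 := by
  have h₁ := abs_le.mp (abs_jSign_le (a := a) (h := h) (S (n + 1) ω))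
  have h₂ := abs_le.mp (abs_jSign_le (a := a) (h := h) (S n ω))
  rw [abs_le, incr]
  constructor <;> nlinarith

end Signs

namespace IsRWG

variable {Ω : Type} [mΩ : MeasurableSpace Ω] {P : Measure Ω} {a h p α : ℝ}
  {q : Fin 2 → Fin 2 → Fin 3 → ℝ} {S : ℕ → Ω → E} {F : ℕ → MeasurableSpace Ω}

lemma filtration_le (hRW : IsRWG P a h p α q S F) (n : ℕ) : F n ≤ mΩ := by
  rw [hRW.hF n]
  refine Measurable.comap_le (measurable_pi_lambda _ fun k => ?_)
  exact (hRW.hSmeas _).sub (hRW.hSmeas _)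

lemma measurable_filtration (hRW : IsRWG P a h p α q S F) {k n : ℕ} (hkn : k ≤ n) :
    Measurable[F n] (S k) := by
  induction k with
  | zero =>
    have : S 0 = fun _ => 0 := funext hRW.hS0
    rw [this]
    exact measurable_const
  | succ k ih =>
    have hincr : Measurable[F n] fun ω => S (k + 1) ω - S k ω := by
      rw [hRW.hF n]
      exact (measurable_pi_apply (X := fun _ : Fin n => E) ⟨k, hkn⟩).comp
        (comap_measurable fun ω (l : Fin n) => S ((l : ℕ) + 1) ω - S (l : ℕ) ω)
    have : S (k + 1) = fun ω => (S (k + 1) ω - S k ω) + S k ω := by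
      ext1 ω
      simp
    rw [this]
    exact hincr.add (ih (by omega))

lemma ae_mem_evenOdd (hRW : IsRWG P a h p α q S F) (n : ℕ) :
    ∀ᵐ ω ∂P, S n ω ∈ evenOdd a h n := by
  have := hRW.prob
  induction n with
  | zero =>
    refine ae_of_all _ fun ω => ⟨0, 0, ⟨0, 0, 0, ?_⟩, by simp⟩
    rw [hRW.hS0]
    ext r
    fin_cases r <;> simp [vec]
  | succ n ih =>
    set f : E → ℝ := (evenOdd a h (n + 1)).indicator fun _ => (1 : ℝ) with hf
    have hfmeas : Measurable f := measurable_const.indicator (measurableSet_evenOdd _)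
    have hf01 : ∀ v, 0 ≤ f v ∧ f v ≤ 1 := fun v => by
      simp only [hf, Set.indicator]
      split_ifs <;> norm_num
    have hfint : Integrable (fun ω => f (S (n + 1) ω)) P := by
      refine Integrable.of_bound (hfmeas.comp (hRW.hSmeas _)).aestronglyMeasurable 1
        (ae_of_all _ fun ω => ?_)
      rw [norm_eq_abs, abs_of_nonneg (hf01 _).1]
      exact (hf01 _).2
    have hone : P[fun ω => f (S (n + 1) ω)|F n] =ᵐ[P] fun _ => 1 := by
      have htr := hRW.hTrans n f hfmeas
        ⟨1, fun v => abs_le.mpr ⟨by linarith [hf01 v], (hf01 v).2⟩⟩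
      filter_upwards [htr, ih] with ω hω hmem
      obtain ⟨i, j, hv, hi⟩ := hmem
      have hval : ∀ {j' v}, v ∈ V a h (i + 1) j' → f v = 1 := fun {j' v} hv' =>
        Set.indicator_of_mem (show v ∈ evenOdd a h (n + 1) from ⟨i + 1, j', hv', by
          rw [neg_one_pow_fin_add_one, hi, pow_succ]; ring⟩) _
      rw [hω, sum_indicator_V hRW.ha hRW.hh hv
        (fun i => α * p * f (S n ω + vec 0 0 h) + (1 - α) * p * f (S n ω + vec 0 0 (-h)) +
            ∑ k : Fin 3, q i 0 k * f (S n ω + w a i k))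
        (fun i => ∑ k : Fin 3, q i 1 k * f (S n ω + w a i k))]
      simp only [Fin.sum_univ_three, hval (add_w_mem _ hv)]
      have h₀ := hRW.hqsum0 i
      have h₁ := hRW.hqsum1 i
      split_ifs with hj
      · subst hj
        rw [hval (add_vec_up_mem hv), hval (add_vec_down_mem hv)]
        linarith
      · linarith
    have hint : ∫ ω, f (S (n + 1) ω) ∂P = 1 := by
      rw [← integral_condExp (hRW.filtration_le n), integral_congr_ae hone]
      simp
    have hzero : (fun ω => 1 - f (S (n + 1) ω)) =ᵐ[P] 0 := by
      refine (integral_eq_zero_iff_of_nonneg (fun ω => by simpa using (hf01 (S (n + 1) ω)).2)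
        ((integrable_const 1).sub hfint)).mp ?_
      rw [integral_sub' (integrable_const 1) hfint, hint]
      simp
    filter_upwards [hzero] with ω hω
    by_contra hnot
    rw [hf, Set.indicator_of_notMem hnot] at hω
    norm_num at hω

lemma measurable_incr_filtration (hRW : IsRWG P a h p α q S F) {k n : ℕ} (hkn : k < n) :
    Measurable[F n] (incr a h p S k) :=
  (measurable_jSign.comp (hRW.measurable_filtration hkn)).add
    (((measurable_jSign.comp (hRW.measurable_filtration hkn.le)).const_mul _).sub_const _)

lemma condExp_incr (hRW : IsRWG P a h p α q S F) (n : ℕ) :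
    P[incr a h p S n|F n] =ᵐ[P] 0 := by
  have := hRW.prob
  have hint : ∀ m, Integrable (fun ω => jSign a h (S m ω)) P := fun m =>
    Integrable.of_bound (measurable_jSign.comp (hRW.hSmeas m)).aestronglyMeasurable 1
      (ae_of_all _ fun ω => abs_jSign_le _)
  have hpast : P[fun ω => (1 - p) * jSign a h (S n ω) - p|F n] =
      fun ω => (1 - p) * jSign a h (S n ω) - p := by
    refine condExp_of_stronglyMeasurable (hRW.filtration_le n) ?_
      (((hint n).const_mul _).sub (integrable_const _))
    exact (((measurable_jSign.comp (hRW.measurable_filtration le_rfl)).const_mul _).sub_const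
      _).stronglyMeasurable
  have hadd := condExp_add (m := F n) (hint (n + 1))
    (((hint n).const_mul (1 - p)).sub (integrable_const p))
  filter_upwards [hadd, hRW.hTrans n (jSign a h) measurable_jSign ⟨1, abs_jSign_le⟩,
    hRW.ae_mem_evenOdd n] with ω h₁ h₂ hmem
  obtain ⟨i, j, hv, -⟩ := hmem
  refine h₁.trans ?_
  have h₃ := congrFun hpast ω
  have h₄ := hRW.hqsum0 i
  have h₅ := hRW.hqsum1 i
  have hw : ∀ k, jSign a h (S n ω + w a i k) = (-1) ^ ((j + 1 : Fin 2) : ℕ) := fun k =>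
    jSign_of_mem hRW.ha hRW.hh (add_w_mem k hv)
  refine (congrArg₂ (· + ·) h₂ h₃).trans ?_
  rw [sum_indicator_V hRW.ha hRW.hh hv
    (fun i => α * p * jSign a h (S n ω + vec 0 0 h) +
      (1 - α) * p * jSign a h (S n ω + vec 0 0 (-h)) +
        ∑ k : Fin 3, q i 0 k * jSign a h (S n ω + w a i k))
    (fun i => ∑ k : Fin 3, q i 1 k * jSign a h (S n ω + w a i k))]
  simp only [Fin.sum_univ_three, hw, jSign_of_mem hRW.ha hRW.hh hv, neg_one_pow_fin_add_one]
  obtain rfl | rfl : j = 0 ∨ j = 1 := by omega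
  · rw [jSign_of_mem hRW.ha hRW.hh (add_vec_up_mem hv),
      jSign_of_mem hRW.ha hRW.hh (add_vec_down_mem hv)]
    simp
    linarith
  · simp
    linarith

/-- Any deterministic modulation of the increments by signs has partial sums `O(√(n log n))`. -/
lemma ae_eventually_signed_sum_sq_le (hRW : IsRWG P a h p α q S F) {ε : ℕ → ℝ}
    (hε : ∀ n, |ε n| = 1) :
    ∀ᵐ ω ∂P, ∀ᶠ n : ℕ in atTop,
      (∑ l ∈ Finset.range n, ε l * incr a h p S l ω) ^ 2 ≤ 16 * (n * log n) := by
  have := hRW.prob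
  have key := ae_eventually_sum_sq_le (P := P) (F := F)
    (ξ := fun n ω => ε n * incr a h p S n ω) (c := 2) two_pos hRW.filtration_le
    (fun n => ((hRW.measurable_incr_filtration n.lt_succ_self).mono
      (hRW.filtration_le _) le_rfl).const_mul _)
    (fun n ω => by
      rw [abs_mul, hε, one_mul]
      exact abs_incr_le hRW.hp0 hRW.hp1 n ω)
    (fun n => Finset.measurable_sum _ fun l hl =>
      (hRW.measurable_incr_filtration (Finset.mem_range.mp hl)).const_mul _)
    (fun n => by
      filter_upwards [condExp_smul (ε n) (incr a h p S n) (F n) (μ := P), hRW.condExp_incr n]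
        with ω h₁ h₂
      exact h₁.trans (by simp [h₂]))
  filter_upwards [key] with ω hω
  filter_upwards [hω] with n hn
  linarith

lemma ae_signs (hRW : IsRWG P a h p α q S F) :
    ∀ᵐ ω ∂P, ∀ n, iP a h S n ω = (-1) ^ n ∧ kP a h S n ω = (-1) ^ n * jP a h S n ω := by
  filter_upwards [ae_all_iff.mpr hRW.ae_mem_evenOdd] with ω hω n
  obtain ⟨i, j, hv, hi⟩ := hω n
  rw [iP_of_mem hRW.ha hRW.hh hv, kP_of_mem hRW.ha hRW.hh hv, jP_eq_jSign,
    jSign_of_mem hRW.ha hRW.hh hv, hi]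
  exact ⟨rfl, rfl⟩

end IsRWG

section Averages

/-- If `d (Yₙ - L n)` is within bounded distance of a sequence of order `√(n log n)`, then
`(Yₙ / n - L)²` is of order `log n / n`. -/
lemma exists_sq_div_sub_le {Y M : ℕ → ℝ} {d L B C : ℝ} (hd : 0 < d) (hC : 0 ≤ C)
    (hY : ∀ n, |d * (Y n - L * n) - M n| ≤ B)
    (hM : ∀ᶠ n : ℕ in atTop, M n ^ 2 ≤ C * (n * log n)) :
    ∃ C' > (0 : ℝ), ∃ N₀ : ℕ, ∀ n ≥ N₀, (Y n / n - L) ^ 2 ≤ C' * log n / n := by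
  obtain ⟨N, hN⟩ := eventually_atTop.mp hM
  refine ⟨(2 * C + 2 * B ^ 2 + 1) / d ^ 2, by positivity, max N 3, fun n hn => ?_⟩
  have hn3 : (3 : ℝ) ≤ n := by exact_mod_cast (le_max_right _ _).trans hn
  have hn0 : (0 : ℝ) < n := by linarith
  have hlog : 1 ≤ log n := by
    rw [le_log_iff_exp_le hn0]
    linarith [exp_one_lt_three]
  have hnlog : 1 ≤ n * log n := by nlinarith
  have hMn := hN n ((le_max_left _ _).trans hn)
  have hB : (d * (Y n - L * n) - M n) ^ 2 ≤ B ^ 2 := sq_le_sq' (abs_le.mp (hY n)).1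
    (abs_le.mp (hY n)).2
  have hmain : (d * (Y n - L * n)) ^ 2 ≤ (2 * C + 2 * B ^ 2 + 1) * (n * log n) := by
    nlinarith [sq_nonneg (d * (Y n - L * n) - 2 * M n), sq_nonneg B,
      mul_le_mul_of_nonneg_left hnlog (sq_nonneg B)]
  have hsq : (Y n / n - L) ^ 2 = (d * (Y n - L * n)) ^ 2 / (d ^ 2 * n ^ 2) := by
    field_simp
  rw [hsq, div_le_iff₀ (by positivity)]
  refine hmain.trans (le_of_eq ?_)
  field_simp

lemma tendsto_of_sq_sub_le {y : ℕ → ℝ} {L C : ℝ} {N₀ : ℕ}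
    (hy : ∀ n ≥ N₀, (y n - L) ^ 2 ≤ C * log n / n) : Tendsto y atTop (nhds L) := by
  have hlog : Tendsto (fun n : ℕ => C * log n / n) atTop (nhds 0) := by
    have h₁ : Tendsto (fun x : ℝ => log x / x) atTop (nhds 0) := by
      simpa using tendsto_pow_log_div_mul_add_atTop 1 0 1 one_ne_zero
    simpa [mul_div_assoc] using (h₁.comp tendsto_natCast_atTop_atTop).const_mul C
  have hsq : Tendsto (fun n => (y n - L) ^ 2) atTop (nhds 0) :=
    squeeze_zero' (Eventually.of_forall fun n => sq_nonneg _)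
      (eventually_atTop.mpr ⟨N₀, hy⟩) hlog
  have habs : Tendsto (fun n => |y n - L|) atTop (nhds 0) := by
    simpa [sqrt_sq_eq_abs] using hsq.sqrt
  simpa using ((tendsto_zero_iff_abs_tendsto_zero _).mpr habs).add_const L

lemma sum_range_succ_shift (x : ℕ → ℝ) (n : ℕ) :
    ∑ l ∈ Finset.range n, x (l + 1) = ∑ l ∈ Finset.range (n + 1), x l - x 0 := by
  rw [Finset.sum_range_succ']
  ring

lemma abs_sum_neg_one_pow_le (n : ℕ) : |∑ l ∈ Finset.range n, (-1 : ℝ) ^ l| ≤ 1 := by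
  rw [neg_one_geom_sum]
  split_ifs <;> simp

end Averages

end RWG

theorem rwg_occupation {Ω : Type} [MeasurableSpace Ω] (P : Measure Ω)
    (a h p α : ℝ) (q : Fin 2 → Fin 2 → Fin 3 → ℝ)
    (S : ℕ → Ω → RWG.E) (F : ℕ → MeasurableSpace Ω)
    (hRW : RWG.IsRWG P a h p α q S F) (hp : 0 < p) :
    (∀ᵐ ω ∂P, Tendsto (fun n : ℕ => RWG.IG a h S n ω / n) atTop (nhds 0)) ∧
    (∀ᵐ ω ∂P, Tendsto (fun n : ℕ => RWG.JG a h S n ω / n) atTop (nhds (p / (2 - p)))) ∧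
    (∀ᵐ ω ∂P, Tendsto (fun n : ℕ => RWG.KG a h S n ω / n) atTop (nhds 0)) ∧
    (∀ᵐ ω ∂P, ∃ C > (0 : ℝ), ∃ N₀ : ℕ, ∀ n ≥ N₀,
      (RWG.JG a h S n ω / n - p / (2 - p)) ^ 2 ≤ C * Real.log n / n) := by
  have hd : 0 < 2 - p := by linarith [hRW.hp1]
  have hp1 : p ≤ 1 := hRW.hp1
  have hj : ∀ n ω, |RWG.jP a h S n ω| ≤ 1 := fun n ω => RWG.abs_jSign_le _
  have hJ : ∀ᵐ ω ∂P, ∃ C > (0 : ℝ), ∃ N₀ : ℕ, ∀ n ≥ N₀,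
      (RWG.JG a h S n ω / n - p / (2 - p)) ^ 2 ≤ C * Real.log n / n := by
    filter_upwards [hRW.ae_eventually_signed_sum_sq_le (ε := fun _ => 1) (by simp)] with ω hω
    refine RWG.exists_sq_div_sub_le (d := 2 - p) (B := 2) hd (by norm_num) (fun n => ?_) hω
    have hsum : ∑ l ∈ Finset.range n, 1 * RWG.incr a h p S l ω =
        (RWG.JG a h S n ω - RWG.jP a h S 0 ω) +
          ((1 - p) * (RWG.JG a h S n ω - RWG.jP a h S n ω) - n * p) := by
      simp only [one_mul, RWG.incr, ← RWG.jP_eq_jSign, Finset.sum_add_distrib,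
        Finset.sum_sub_distrib, ← Finset.mul_sum,
        RWG.sum_range_succ_shift fun l => RWG.jP a h S l ω, Finset.sum_const, Finset.card_range,
        nsmul_eq_mul, RWG.JG]
      rw [Finset.sum_range_succ]
      ring
    have hdiff : (2 - p) * (RWG.JG a h S n ω - p / (2 - p) * n) -
        ∑ l ∈ Finset.range n, 1 * RWG.incr a h p S l ω =
        RWG.jP a h S 0 ω + (1 - p) * RWG.jP a h S n ω := by
      rw [hsum]
      field_simp
      ring
    rw [hdiff]
    have h₁ := abs_le.mp (hj 0 ω)
    have h₂ := abs_le.mp (hj n ω)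
    rw [abs_le]
    constructor <;> nlinarith
  refine ⟨?_, ?_, ?_, hJ⟩
  · filter_upwards [hRW.ae_signs] with ω hω
    obtain ⟨C, -, N₀, hC⟩ := RWG.exists_sq_div_sub_le (Y := fun n => RWG.IG a h S n ω)
      (M := 0) (d := 1) (L := 0) (B := 1) (C := 0) one_pos le_rfl
      (fun n => by simpa [RWG.IG, hω] using RWG.abs_sum_neg_one_pow_le (n + 1)) (by simp)
    exact RWG.tendsto_of_sq_sub_le hC
  · filter_upwards [hJ] with ω ⟨C, _, N₀, hC⟩
    exact RWG.tendsto_of_sq_sub_le hC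
  · filter_upwards [hRW.ae_signs, hRW.ae_eventually_signed_sum_sq_le
      (ε := fun n => (-1) ^ (n + 1)) (by simp)] with ω hsign hω
    suffices hdist : ∀ n : ℕ, |p * (RWG.KG a h S n ω - 0 * n) -
        ∑ l ∈ Finset.range n, (-1) ^ (l + 1) * RWG.incr a h p S l ω| ≤ 3 by
      obtain ⟨C, -, N₀, hC⟩ := RWG.exists_sq_div_sub_le hp (by norm_num) hdist hω
      exact RWG.tendsto_of_sq_sub_le hC
    intro n
    have hsum : ∑ l ∈ Finset.range n, (-1) ^ (l + 1) * RWG.incr a h p S l ω =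
        (RWG.KG a h S n ω - RWG.kP a h S 0 ω) -
          (1 - p) * (RWG.KG a h S n ω - RWG.kP a h S n ω) +
          p * ∑ l ∈ Finset.range n, (-1) ^ l := by
      have hterm : ∀ l, (-1) ^ (l + 1) * RWG.incr a h p S l ω =
          RWG.kP a h S (l + 1) ω - (1 - p) * RWG.kP a h S l ω + p * (-1) ^ l := fun l => by
        rw [(hsign l).2, (hsign (l + 1)).2, RWG.incr, RWG.jP_eq_jSign, RWG.jP_eq_jSign]
        ring
      simp only [hterm, Finset.sum_add_distrib, Finset.sum_sub_distrib, ← Finset.mul_sum,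
        RWG.sum_range_succ_shift fun l => RWG.kP a h S l ω, RWG.KG]
      rw [Finset.sum_range_succ]
      ring
    have hk : ∀ m, |RWG.kP a h S m ω| ≤ 1 := fun m => by
      rw [(hsign m).2, abs_mul, abs_pow, abs_neg, abs_one, one_pow, one_mul]
      exact hj m ω
    have hdiff : p * (RWG.KG a h S n ω - 0 * n) -
        ∑ l ∈ Finset.range n, (-1) ^ (l + 1) * RWG.incr a h p S l ω =
        RWG.kP a h S 0 ω - (1 - p) * RWG.kP a h S n ω - p * ∑ l ∈ Finset.range n, (-1) ^ l := by
      rw [hsum]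
      ring
    rw [hdiff]
    have h₁ := abs_le.mp (hk 0)
    have h₂ := abs_le.mp (hk n)
    have h₃ := abs_le.mp (RWG.abs_sum_neg_one_pow_le n)
    rw [abs_le]
    constructor <;> nlinarith
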